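/- Let T₁ and T₂ be densely defined closed operators in a complex Hilbert space H such that 0 lies in the field of regularity of T₁ and of T₂, and assume the defect numbers def(T₁,0) = dim ker(T₁*) and def(T₂,0) = dim ker(T₂*) are finite. Then T₁T₂ and T₂T₁ are densely defined and closed, 0 lies in the field of regularity of both T₁T₂ and T₂T₁, and def(T₁T₂,0) = def(T₁,0) + def(T₂,0) = def(T₂T₁,0). -/

import Mathlib

open scoped InnerProductSpace
open Cardinal

noncomputable section

variable {E F G H : Type*}
  [NormedAddCommGroup E] [InnerProductSpace ℂ E] [CompleteSpace E]
  [NormedAddCommGroup F] [InnerProductSpace ℂ F] [CompleteSpace F]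
  [NormedAddCommGroup G] [InnerProductSpace ℂ G] [CompleteSpace G]
  [NormedAddCommGroup H] [InnerProductSpace ℂ H] [CompleteSpace H]

/-- The product (composition) `T₂T₁` of two partially defined linear operators, with domain
`dom(T₂T₁) = {f ∈ dom T₁ | T₁ f ∈ dom T₂}` and value `(T₂T₁) f = T₂ (T₁ f)`. -/
def pcomp {E F G : Type*}
    [NormedAddCommGroup E] [InnerProductSpace ℂ E]
    [NormedAddCommGroup F] [InnerProductSpace ℂ F]
    [NormedAddCommGroup G] [InnerProductSpace ℂ G]
    (T₂ : F →ₗ.[ℂ] G) (T₁ : E →ₗ.[ℂ] F) : E →ₗ.[ℂ] G where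
  domain := (T₂.domain.comap T₁.toFun).map T₁.domain.subtype
  toFun := T₂.toFun ∘ₗ
    (T₁.toFun.restrict (p := T₂.domain.comap T₁.toFun) (q := T₂.domain) fun _ hx => hx) ∘ₗ
    (Submodule.equivMapOfInjective T₁.domain.subtype (Submodule.injective_subtype _)
      (T₂.domain.comap T₁.toFun)).symm.toLinearMap

/-- The identity as a partially defined operator (domain all of `X`). -/
def pid (X : Type*) [NormedAddCommGroup X] [InnerProductSpace ℂ X] : X →ₗ.[ℂ] X :=
  ⟨⊤, (⊤ : Submodule ℂ X).subtype⟩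

/-- Powers of a partially defined operator: `S⁰ = I`, `S¹ = S`, and recursively
`dom(S^m) = {f ∈ dom(S^{m-1}) | S^{m-1} f ∈ dom S}`, `S^m f = S (S^{m-1} f)`. -/
def pmapPow {X : Type*} [NormedAddCommGroup X] [InnerProductSpace ℂ X]
    (S : X →ₗ.[ℂ] X) : ℕ → X →ₗ.[ℂ] X
  | 0 => pid X
  | 1 => S
  | (n + 2) => pcomp S (pmapPow S (n + 1))

/-- The kernel of `A - μ·I` as a submodule of the domain of `A`. -/
def kerAt {X : Type*} [NormedAddCommGroup X] [InnerProductSpace ℂ X]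
    (A : X →ₗ.[ℂ] X) (μ : ℂ) : Submodule ℂ A.domain :=
  LinearMap.ker (A.toFun - μ • A.domain.subtype)

/-- Deficiency index `n₊(S) = dim ker(S* - i·I)`, a Hilbert-space dimension as a cardinal. -/
def nPlus (S : H →ₗ.[ℂ] H) : Cardinal := Module.rank ℂ (kerAt S.adjoint Complex.I)

/-- Deficiency index `n₋(S) = dim ker(S* + i·I)`, a Hilbert-space dimension as a cardinal. -/
def nMinus (S : H →ₗ.[ℂ] H) : Cardinal := Module.rank ℂ (kerAt S.adjoint (-Complex.I))

/-- The symmetry condition `⟪Sf, g⟫ = ⟪f, Sg⟫` for all `f, g` in the domain of `S`. -/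
def IsSymmP {X : Type*} [NormedAddCommGroup X] [InnerProductSpace ℂ X]
    (S : X →ₗ.[ℂ] X) : Prop :=
  ∀ f g : S.domain, ⟪S f, (g : X)⟫_ℂ = ⟪(f : X), S g⟫_ℂ

/-- The defect number of `T` at `0`: `def(T,0) = dim ker(T*)`, as a cardinal. -/
def defect0 (T : E →ₗ.[ℂ] F) : Cardinal := Module.rank ℂ (LinearMap.ker T.adjoint.toFun)

/-- `0` belongs to the field of regularity of `T`: there is `c > 0` with
`‖T f‖ ≥ c ‖f‖` for all `f ∈ dom T`. -/
def ZeroRegular {X Y : Type*} [NormedAddCommGroup X] [InnerProductSpace ℂ X]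
    [NormedAddCommGroup Y] [InnerProductSpace ℂ Y] (T : X →ₗ.[ℂ] Y) : Prop :=
  ∃ c : ℝ, 0 < c ∧ ∀ f : T.domain, c * ‖(f : X)‖ ≤ ‖T f‖

/-- `T` is Fredholm: densely defined, closed, with closed range, and finite-dimensional
kernel and cokernel (= kernel of the adjoint). -/
def IsFredholmP (T : E →ₗ.[ℂ] F) : Prop :=
  Dense (T.domain : Set E) ∧ T.IsClosed ∧
    IsClosed ((LinearMap.range T.toFun : Submodule ℂ F) : Set F) ∧
    Module.rank ℂ (LinearMap.ker T.toFun) < ℵ₀ ∧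
    Module.rank ℂ (LinearMap.ker T.adjoint.toFun) < ℵ₀

/-- `T` is left semi-Fredholm: densely defined, closed, with closed range and
finite-dimensional kernel. -/
def IsLeftSemiFredholmP (T : E →ₗ.[ℂ] F) : Prop :=
  Dense (T.domain : Set E) ∧ T.IsClosed ∧
    IsClosed ((LinearMap.range T.toFun : Submodule ℂ F) : Set F) ∧
    Module.rank ℂ (LinearMap.ker T.toFun) < ℵ₀

/-- The (semi-)Fredholm index `ind(T) = dim ker T - dim ker T*` (as an integer,
via `finrank`). -/
def indP (T : E →ₗ.[ℂ] F) : ℤ :=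
  (Module.finrank ℂ (LinearMap.ker T.toFun) : ℤ) -
    (Module.finrank ℂ (LinearMap.ker T.adjoint.toFun) : ℤ)

theorem mem_graph_pcomp (A B : H →ₗ.[ℂ] H) (f g : H) :
    (f, g) ∈ (pcomp A B).graph ↔ ∃ h, (f, h) ∈ B.graph ∧ (h, g) ∈ A.graph := by
  have key : ∀ (x : B.domain) (hx : B x ∈ A.domain) (hf : (x : H) ∈ (pcomp A B).domain),
      (pcomp A B) ⟨x, hf⟩ = A ⟨B x, hx⟩ := by
    intro x hx hf
    have e : (Submodule.equivMapOfInjective B.domain.subtype (Submodule.injective_subtype _)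
      (A.domain.comap B.toFun)).symm ⟨x, hf⟩ = ⟨x, hx⟩ := by
      rw [LinearEquiv.symm_apply_eq]
      rfl
    change A.toFun ((B.toFun.restrict (p := A.domain.comap B.toFun) (q := A.domain)
      fun _ hx => hx) ((Submodule.equivMapOfInjective B.domain.subtype
        (Submodule.injective_subtype _) (A.domain.comap B.toFun)).symm ⟨x, hf⟩)) = _
    rw [e]
    rfl
  constructor
  · intro h
    obtain ⟨⟨y, hy⟩, h1, h2⟩ := (LinearPMap.mem_graph_iff _).1 h
    obtain ⟨x, hx, rfl⟩ := hy
    simp only at h1 h2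
    subst h1
    refine ⟨B x, B.mem_graph x, ?_⟩
    rw [← h2]
    have := key x hx ⟨x, hx, rfl⟩
    erw [this]
    exact A.mem_graph ⟨B x, hx⟩
  · rintro ⟨h, h1, h2⟩
    obtain ⟨x, rfl, rfl⟩ := (LinearPMap.mem_graph_iff _).1 h1
    obtain ⟨y, hy, rfl⟩ := (LinearPMap.mem_graph_iff _).1 h2
    simp only at hy
    have hx : B x ∈ A.domain := hy ▸ y.2
    have hf : (x : H) ∈ (pcomp A B).domain := ⟨x, hx, rfl⟩
    have e : y = ⟨B x, hx⟩ := Subtype.ext hy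
    rw [e, ← key x hx hf]
    exact (pcomp A B).mem_graph ⟨x, hf⟩

theorem mem_range_iff_graph (T : H →ₗ.[ℂ] H) (g : H) :
    g ∈ LinearMap.range T.toFun ↔ ∃ f, (f, g) ∈ T.graph := by
  constructor
  · rintro ⟨f, rfl⟩
    exact ⟨f, T.mem_graph f⟩
  · rintro ⟨f, h⟩
    obtain ⟨x, _, h2⟩ := (LinearPMap.mem_graph_iff _).1 h
    exact ⟨x, h2⟩

theorem zeroRegular_graph (T : H →ₗ.[ℂ] H) : ZeroRegular T ↔
    ∃ c : ℝ, 0 < c ∧ ∀ f g, (f, g) ∈ T.graph → c * ‖f‖ ≤ ‖g‖ := by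
  constructor
  · rintro ⟨c, hc, h⟩
    refine ⟨c, hc, fun f g hfg => ?_⟩
    obtain ⟨x, h1, h2⟩ := (LinearPMap.mem_graph_iff _).1 hfg
    simp only at h1 h2
    rw [← h1, ← h2]
    exact h x
  · rintro ⟨c, hc, h⟩
    exact ⟨c, hc, fun f => h _ _ (T.mem_graph f)⟩

theorem defect0_eq (T : H →ₗ.[ℂ] H) (hd : Dense (T.domain : Set H)) :
    defect0 T = Module.rank ℂ (LinearMap.range T.toFun)ᗮ := by
  have e : (LinearMap.ker T.adjoint.toFun).map T.adjoint.domain.subtype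
      = (LinearMap.range T.toFun)ᗮ := by
    ext y
    rw [Submodule.mem_orthogonal']
    constructor
    · rintro ⟨z, hz, rfl⟩
      rintro _ ⟨x, rfl⟩
      have h := LinearPMap.adjoint_isFormalAdjoint hd z x
      have hz' : T.adjoint z = 0 := hz
      rw [hz', inner_zero_left] at h
      exact h.symm
    · intro h
      have h0 : ∀ x : T.domain, ⟪(0 : H), (x : H)⟫_ℂ = ⟪y, T x⟫_ℂ := by
        intro x
        rw [inner_zero_left]
        exact (h _ ⟨x, rfl⟩).symm
      have hy : y ∈ T.adjoint.domain := LinearPMap.mem_adjoint_domain_of_exists y ⟨0, h0⟩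
      exact ⟨⟨y, hy⟩, LinearPMap.adjoint_apply_eq hd ⟨y, hy⟩ h0, rfl⟩
  rw [← e, defect0]
  exact (Submodule.equivMapOfInjective T.adjoint.domain.subtype
    (Submodule.injective_subtype _) _).rank_eq

theorem isClosed_range_of_regular (T : H →ₗ.[ℂ] H) (hc : T.IsClosed) (hr : ZeroRegular T) :
    IsClosed ((LinearMap.range T.toFun : Submodule ℂ H) : Set H) := by
  obtain ⟨c, hc0, h⟩ := (zeroRegular_graph T).1 hr
  have hcl : IsClosed (T.graph : Set (H × H)) := hc
  have : CompleteSpace T.graph := hcl.completeSpace_coe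
  let S : T.graph →L[ℂ] H := (ContinuousLinearMap.snd ℂ H H).comp T.graph.subtypeL
  have ha : AntilipschitzWith (Real.toNNReal (max c⁻¹ 1)) S := by
    refine ContinuousLinearMap.antilipschitz_of_bound S ?_
    rintro ⟨⟨f, g⟩, hfg⟩
    have h1 := h f g hfg
    change max ‖f‖ ‖g‖ ≤ (Real.toNNReal (max c⁻¹ 1) : ℝ) * ‖g‖
    rw [Real.coe_toNNReal _ (le_max_of_le_right zero_le_one)]
    have h2 : ‖f‖ ≤ c⁻¹ * ‖g‖ := by
      rw [inv_mul_eq_div, le_div_iff₀ hc0, mul_comm]; exact h1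
    refine max_le (h2.trans ?_) ?_
    · gcongr; exact le_max_left _ _
    · exact le_mul_of_one_le_left (norm_nonneg _) (le_max_right _ _)
  have hh := ha.isClosed_range S.uniformContinuous
  convert hh using 1
  ext g
  rw [SetLike.mem_coe, mem_range_iff_graph]
  constructor
  · rintro ⟨f, hf⟩; exact ⟨⟨(f, g), hf⟩, rfl⟩
  · rintro ⟨⟨⟨f, g'⟩, hf⟩, rfl⟩; exact ⟨f, hf⟩

theorem exists_inverse (T : H →ₗ.[ℂ] H) (hc : T.IsClosed) (hr : ZeroRegular T) :
    ∃ K : H →L[ℂ] H, (∀ f g, (f, g) ∈ T.graph → K g = f) ∧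
      ∀ y ∈ (LinearMap.range T.toFun)ᗮ, K y = 0 := by
  have hcl := isClosed_range_of_regular T hc hr
  obtain ⟨c, hc0, h⟩ := hr
  have : CompleteSpace (LinearMap.range T.toFun) := hcl.completeSpace_coe
  have hinj : Function.Injective T.toFun := by
    rw [← LinearMap.ker_eq_bot, LinearMap.ker_eq_bot']
    intro f hf
    have h1 := h f
    have hf' : T f = 0 := hf
    rw [hf', norm_zero] at h1
    have : ‖(f : H)‖ ≤ 0 := by nlinarith [norm_nonneg (f : H)]
    exact Subtype.ext (norm_le_zero_iff.1 this)
  let e := LinearEquiv.ofInjective T.toFun hinj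
  let K0 : LinearMap.range T.toFun →L[ℂ] H :=
    (T.domain.subtype ∘ₗ e.symm.toLinearMap).mkContinuous c⁻¹ (by
      intro y
      have h1 := h (e.symm y)
      have h2 : T (e.symm y) = y := congrArg Subtype.val (e.apply_symm_apply y)
      rw [h2] at h1
      rw [inv_mul_eq_div, le_div_iff₀ hc0, mul_comm]
      exact h1)
  refine ⟨K0.comp (LinearMap.range T.toFun).orthogonalProjectionOnto, ?_, ?_⟩
  · intro f g hfg
    obtain ⟨x, h1, h2⟩ := (LinearPMap.mem_graph_iff _).1 hfg
    simp only at h1 h2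
    have hg : g = (e x : H) := h2.symm
    rw [hg, ContinuousLinearMap.comp_apply,
      Submodule.orthogonalProjectionOnto_mem_subspace_eq_self (e x), ← h1]
    change ((e.symm (e x) : T.domain) : H) = x
    rw [e.symm_apply_apply]
  · intro y hy
    rw [ContinuousLinearMap.comp_apply,
      Submodule.orthogonalProjectionOnto_eq_zero_iff.2 hy, map_zero]

/-- a dense subspace projects onto any finite-dimensional quotient -/
theorem dense_proj_surj (D R : Submodule ℂ H) (hD : Dense (D : Set H))
    [FiniteDimensional ℂ Rᗮ] (v : Rᗮ) : ∃ d ∈ D, Rᗮ.orthogonalProjectionOnto d = v := by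
  let M : Submodule ℂ Rᗮ := D.map (Rᗮ.orthogonalProjectionOnto : H →L[ℂ] Rᗮ).toLinearMap
  have hM : IsClosed (M : Set Rᗮ) := M.closed_of_finiteDimensional
  have hs : Function.Surjective (Rᗮ.orthogonalProjectionOnto : H →L[ℂ] Rᗮ) := fun v =>
    ⟨v, Submodule.orthogonalProjectionOnto_mem_subspace_eq_self v⟩
  have hd : Dense (M : Set Rᗮ) :=
    hs.denseRange.dense_image (Rᗮ.orthogonalProjectionOnto : H →L[ℂ] Rᗮ).continuous hD
  have hv : v ∈ (M : Set Rᗮ) := by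
    rw [← hM.closure_eq]; exact hd v
  obtain ⟨d, hd, h⟩ := hv
  exact ⟨d, hd, h⟩

theorem dense_inter (D R : Submodule ℂ H) (hD : Dense (D : Set H))
    (hR : IsClosed (R : Set H)) [FiniteDimensional ℂ Rᗮ] (x : H) (hx : x ∈ R) :
    x ∈ closure ((D : Set H) ∩ R) := by
  let P : H →L[ℂ] Rᗮ := Rᗮ.orthogonalProjectionOnto
  let PD : D →ₗ[ℂ] Rᗮ := P.toLinearMap ∘ₗ D.subtype
  have hs : LinearMap.range PD = ⊤ := by
    rw [LinearMap.range_eq_top]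
    intro v
    obtain ⟨d, hd, h⟩ := dense_proj_surj D R hD v
    exact ⟨⟨d, hd⟩, h⟩
  obtain ⟨S, hS⟩ := PD.exists_rightInverse_of_surjective hs
  let S' : Rᗮ →L[ℂ] H := LinearMap.toContinuousLinearMap (D.subtype ∘ₗ S)
  have hS1 : ∀ v, S' v ∈ D := fun v => (S v).2
  have hS2 : ∀ v, P (S' v) = v := fun v => LinearMap.congr_fun hS v
  have : CompleteSpace R := hR.completeSpace_coe
  have hPR : ∀ y, P y = 0 ↔ y ∈ R := by
    intro y
    change Rᗮ.orthogonalProjectionOnto y = 0 ↔ _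
    rw [Submodule.orthogonalProjectionOnto_eq_zero_iff, Submodule.orthogonal_orthogonal]
  let Q : H →L[ℂ] H := ContinuousLinearMap.id ℂ H - S'.comp P
  have hQ : ∀ y, Q y = y - S' (P y) := fun y => rfl
  have hQx : Q x = x := by rw [hQ, (hPR x).2 hx, map_zero, sub_zero]
  rw [← hQx]
  refine map_mem_closure Q.continuous (hD x) ?_
  intro d hd
  refine ⟨D.sub_mem hd (hS1 _), ?_⟩
  change Q d ∈ R
  rw [← hPR, hQ, map_sub, hS2, sub_self]

theorem glazman_half (A B : H →ₗ.[ℂ] H)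
    (hAd : Dense (A.domain : Set H)) (hAc : A.IsClosed) (hAr : ZeroRegular A)
    (hBd : Dense (B.domain : Set H)) (hBc : B.IsClosed) (hBr : ZeroRegular B)
    (hBf : defect0 B < ℵ₀) :
    Dense (((pcomp A B).domain : Submodule ℂ H) : Set H) ∧
    (pcomp A B).IsClosed ∧ ZeroRegular (pcomp A B) ∧
    defect0 (pcomp A B) = defect0 A + defect0 B := by
  obtain ⟨KA, hKA, hKA0⟩ := exists_inverse A hAc hAr
  obtain ⟨KB, hKB, -⟩ := exists_inverse B hBc hBr
  have hRA := isClosed_range_of_regular A hAc hAr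
  have hRB := isClosed_range_of_regular B hBc hBr
  have : CompleteSpace (LinearMap.range A.toFun) := hRA.completeSpace_coe
  have : CompleteSpace (LinearMap.range B.toFun) := hRB.completeSpace_coe
  have : FiniteDimensional ℂ (LinearMap.range B.toFun)ᗮ := by
    rw [defect0_eq B hBd] at hBf
    exact Module.rank_lt_aleph0_iff.1 hBf
  have hAcl : IsClosed (A.graph : Set (H × H)) := hAc
  have hBcl : IsClosed (B.graph : Set (H × H)) := hBc
  -- density
  have hd : Dense (((pcomp A B).domain : Submodule ℂ H) : Set H) := by
    rw [← dense_closure]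
    refine hBd.mono ?_
    intro f hf
    have hfg := B.mem_graph ⟨f, hf⟩
    have h1 : B ⟨f, hf⟩ ∈ LinearMap.range B.toFun := ⟨⟨f, hf⟩, rfl⟩
    have h2 := dense_inter A.domain _ hAd hRB _ h1
    have h3 : KB (B ⟨f, hf⟩) = f := hKB _ _ hfg
    rw [← h3]
    refine map_mem_closure KB.continuous h2 ?_
    rintro y ⟨hyA, hyB⟩
    obtain ⟨x, hx⟩ := (mem_range_iff_graph B y).1 hyB
    rw [hKB _ _ hx]
    have : (x, A ⟨y, hyA⟩) ∈ (pcomp A B).graph :=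
      (mem_graph_pcomp A B _ _).2 ⟨y, hx, A.mem_graph ⟨y, hyA⟩⟩
    exact LinearPMap.mem_domain_of_mem_graph this
  -- closedness
  have hcl : (pcomp A B).IsClosed := by
    have e : ((pcomp A B).graph : Set (H × H)) =
        (fun p : H × H => (p.1, KA p.2)) ⁻¹' B.graph ∩
        (fun p : H × H => (KA p.2, p.2)) ⁻¹' A.graph := by
      ext ⟨f, g⟩
      rw [SetLike.mem_coe, mem_graph_pcomp]
      constructor
      · rintro ⟨h, h1, h2⟩
        have := hKA _ _ h2
        subst this
        exact ⟨h1, h2⟩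
      · rintro ⟨h1, h2⟩
        exact ⟨_, h1, h2⟩
    change IsClosed ((pcomp A B).graph : Set (H × H))
    rw [e]
    exact (hBcl.preimage (by fun_prop)).inter (hAcl.preimage (by fun_prop))
  -- regularity
  have hr : ZeroRegular (pcomp A B) := by
    obtain ⟨a, ha, hA⟩ := (zeroRegular_graph A).1 hAr
    obtain ⟨b, hb, hB⟩ := (zeroRegular_graph B).1 hBr
    refine (zeroRegular_graph _).2 ⟨a * b, mul_pos ha hb, fun f g hfg => ?_⟩
    obtain ⟨h, h1, h2⟩ := (mem_graph_pcomp A B _ _).1 hfg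
    calc a * b * ‖f‖ = a * (b * ‖f‖) := by ring
      _ ≤ a * ‖h‖ := by gcongr; exact hB _ _ h1
      _ ≤ ‖g‖ := hA _ _ h2
  refine ⟨hd, hcl, hr, ?_⟩
  have hR := isClosed_range_of_regular _ hcl hr
  rw [defect0_eq _ hd, defect0_eq _ hAd, defect0_eq _ hBd]
  set RA := LinearMap.range A.toFun with hRAdef
  set RB := LinearMap.range B.toFun with hRBdef
  set R := LinearMap.range (pcomp A B).toFun with hRdef
  have : CompleteSpace R := hR.completeSpace_coe
  let L : H →ₗ[ℂ] RAᗮ × RBᗮ :=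
    (RAᗮ.orthogonalProjectionOnto : H →L[ℂ] RAᗮ).toLinearMap.prod
      ((RBᗮ.orthogonalProjectionOnto : H →L[ℂ] RBᗮ).toLinearMap ∘ₗ KA.toLinearMap)
  have hL : ∀ y, L y = (RAᗮ.orthogonalProjectionOnto y, RBᗮ.orthogonalProjectionOnto (KA y)) :=
    fun y => rfl
  have hLker : ∀ y, L y = 0 ↔ y ∈ R := by
    intro y
    rw [hL, Prod.mk_eq_zero, Submodule.orthogonalProjectionOnto_eq_zero_iff,
      Submodule.orthogonalProjectionOnto_eq_zero_iff, Submodule.orthogonal_orthogonal,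
      Submodule.orthogonal_orthogonal, hRAdef, hRBdef, hRdef, mem_range_iff_graph,
      mem_range_iff_graph, mem_range_iff_graph]
    constructor
    · rintro ⟨⟨h, h1⟩, f, h2⟩
      rw [hKA _ _ h1] at h2
      exact ⟨f, (mem_graph_pcomp A B _ _).2 ⟨h, h2, h1⟩⟩
    · rintro ⟨f, hf⟩
      obtain ⟨h, h1, h2⟩ := (mem_graph_pcomp A B _ _).1 hf
      refine ⟨⟨h, h2⟩, f, ?_⟩
      rw [hKA _ _ h2]
      exact h1
  have hLs : Function.Surjective L := by
    rintro ⟨u, v⟩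
    obtain ⟨d, hdA, hdv⟩ := dense_proj_surj A.domain RB hAd v
    have hg := A.mem_graph ⟨d, hdA⟩
    refine ⟨(u : H) + A ⟨d, hdA⟩, ?_⟩
    have h1 : RAᗮ.orthogonalProjectionOnto (A ⟨d, hdA⟩) = 0 := by
      rw [Submodule.orthogonalProjectionOnto_eq_zero_iff, Submodule.orthogonal_orthogonal]
      exact ⟨⟨d, hdA⟩, rfl⟩
    have h2 : KA (A ⟨d, hdA⟩) = d := hKA _ _ hg
    rw [hL, map_add, map_add, hKA0 _ u.2, h1, h2, zero_add, add_zero, hdv,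
      Submodule.orthogonalProjectionOnto_mem_subspace_eq_self]
  let L' : Rᗮ →ₗ[ℂ] RAᗮ × RBᗮ := L ∘ₗ Rᗮ.subtype
  have hbij : Function.Bijective L' := by
    constructor
    · rw [← LinearMap.ker_eq_bot, LinearMap.ker_eq_bot']
      intro y hy
      have h1 : (y : H) ∈ R := (hLker y).1 hy
      have h2 := (Submodule.mem_orthogonal R (y : H)).1 y.2 _ h1
      exact Subtype.ext (inner_self_eq_zero.1 h2)
    · intro w
      obtain ⟨y, rfl⟩ := hLs w
      have h1 : y - (R.orthogonalProjectionOnto y : H) ∈ Rᗮ :=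
        Submodule.sub_starProjection_mem_orthogonal y
      refine ⟨⟨_, h1⟩, ?_⟩
      change L (y - (R.orthogonalProjectionOnto y : H)) = L y
      rw [map_sub, (hLker _).2 (R.orthogonalProjectionOnto y).2, sub_zero]
  rw [(LinearEquiv.ofBijective L' hbij).rank_eq, rank_prod']

/-- Glazman's formula: if `T₁, T₂` are densely defined, closed, with `0` in their
field of regularity and finite defect numbers, then `T₁T₂` and `T₂T₁` are densely
defined and closed, `0` is in their field of regularity, and
`def(T₁T₂,0) = def(T₁,0) + def(T₂,0) = def(T₂T₁,0)`. -/
theorem glazman_defect_product (T₁ T₂ : H →ₗ.[ℂ] H)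
    (h₁d : Dense (T₁.domain : Set H)) (h₁c : T₁.IsClosed) (h₁r : ZeroRegular T₁)
    (h₂d : Dense (T₂.domain : Set H)) (h₂c : T₂.IsClosed) (h₂r : ZeroRegular T₂)
    (h₁f : defect0 T₁ < ℵ₀) (h₂f : defect0 T₂ < ℵ₀) :
    Dense (((pcomp T₁ T₂).domain : Submodule ℂ H) : Set H) ∧
    Dense (((pcomp T₂ T₁).domain : Submodule ℂ H) : Set H) ∧
    (pcomp T₁ T₂).IsClosed ∧ (pcomp T₂ T₁).IsClosed ∧
    ZeroRegular (pcomp T₁ T₂) ∧ ZeroRegular (pcomp T₂ T₁) ∧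
    defect0 (pcomp T₁ T₂) = defect0 T₁ + defect0 T₂ ∧
    defect0 (pcomp T₂ T₁) = defect0 T₁ + defect0 T₂ := by
  obtain ⟨a1, a2, a3, a4⟩ := glazman_half T₁ T₂ h₁d h₁c h₁r h₂d h₂c h₂r h₂f
  obtain ⟨b1, b2, b3, b4⟩ := glazman_half T₂ T₁ h₂d h₂c h₂r h₁d h₁c h₁r h₁f
  exact ⟨a1, b1, a2, b2, a3, b3, a4, b4.trans (add_comm _ _)⟩
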